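/- (Bass–Connell–Wright) Let F(z) = z + H(z) be a polynomial map with H homogeneous of degree d ≥ 2. If (JH)^2 = 0 (the square of the Jacobian matrix of H is the zero matrix), then the formal inverse map of F is G(z) = z - H(z). -/

import Mathlib

noncomputable section

/-- The Jacobian matrix `(∂P_i/∂z_j)` of a polynomial map `P`. -/
def jacP {n : ℕ} (P : Fin n → MvPolynomial (Fin n) ℂ) :
    Matrix (Fin n) (Fin n) (MvPolynomial (Fin n) ℂ) :=
  Matrix.of fun i j => MvPolynomial.pderiv j (P i)

/-!
Let `D = ∑ H_j ∂_j`. By Euler's identity `d H = JH · z`, so `d · D(H) = d · JH · H = (JH)² z = 0`,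
and hence `D(H) = 0`. For any polynomial `f`, the polynomial `f(z + tH)` in the new variable `t`
then solves the flow equation `∂p/∂t = D p`: both sides are derivations in `p`, and they agree on
the coordinates `z_j + t H_j` because `D(H_j) = 0`. Comparing coefficients of powers of `t`, a
solution whose value at `t = 0` is killed by `D` does not depend on `t`. Therefore
`H(z + tH) = H(z)`, and `t = ±1` gives the theorem.
-/

section CoeffwiseDerivation

variable {R A : Type*} [CommRing R] [CommRing A] [Algebra R A]

/-- The derivation of `A[t]` that applies `D` to each coefficient, so that `t` is a constant. This
is `Derivation.mapCoeffs` with its values moved from `PolynomialModule A A` to `A[t]`, which makes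
it comparable with `d/dt`. -/
def coeffwiseDerivation (D : Derivation R A A) : Derivation R (Polynomial A) (Polynomial A) :=
  PolynomialModule.equivPolynomialSelf.toLinearMap.compDer D.mapCoeffs

@[simp]
theorem coeff_coeffwiseDerivation (D : Derivation R A A) (p : Polynomial A) (k : ℕ) :
    (coeffwiseDerivation D p).coeff k = D (p.coeff k) :=
  rfl

theorem coeffwiseDerivation_C (D : Derivation R A A) (a : A) :
    coeffwiseDerivation D (Polynomial.C a) = Polynomial.C (D a) := by
  ext k
  rcases k with _ | k <;> simp [Polynomial.coeff_C]

theorem coeffwiseDerivation_X (D : Derivation R A A) :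
    coeffwiseDerivation D Polynomial.X = 0 := by
  ext k
  simp [Polynomial.coeff_X, apply_ite D]

theorem eq_C_of_derivative_eq_coeffwiseDerivation [IsAddTorsionFree A] {D : Derivation R A A}
    {p : Polynomial A} (hp : Polynomial.derivative p = coeffwiseDerivation D p)
    (h0 : D (p.coeff 0) = 0) : p = Polynomial.C (p.coeff 0) := by
  have hD : ∀ k, D (p.coeff k) = 0 := by
    intro k
    induction k with
    | zero => exact h0
    | succ k ih =>
      have hk : (k + 1) • p.coeff (k + 1) = 0 := by
        rw [nsmul_eq_mul', Nat.cast_succ, ← Polynomial.coeff_derivative, hp,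
          coeff_coeffwiseDerivation, ih]
      rw [(smul_eq_zero_iff_right k.succ_ne_zero).mp hk, map_zero]
  apply Polynomial.eq_C_of_derivative_eq_zero
  ext k
  rw [hp, coeff_coeffwiseDerivation, hD, Polynomial.coeff_zero]

end CoeffwiseDerivation

section CommSemiring

open MvPolynomial Matrix

variable {σ ι R : Type*} [CommSemiring R]

instance isAddTorsionFree_mvPolynomial [IsAddTorsionFree R] :
    IsAddTorsionFree (MvPolynomial σ R) :=
  let e : MvPolynomial σ R ≃+ ((σ →₀ ℕ) →₀ R) := AddMonoidAlgebra.coeffAddEquiv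
  e.injective.isAddTorsionFree e.toAddMonoidHom

theorem sum_derivation_apply {A M : Type*} [CommSemiring A] [Algebra R A] [AddCommMonoid M]
    [Module A M] [Module R M] (s : Finset ι) (D : ι → Derivation R A M) (a : A) :
    (∑ i ∈ s, D i) a = ∑ i ∈ s, D i a := by
  simp_rw [← Derivation.coeFnAddMonoidHom_apply, map_sum, Finset.sum_apply]

/-- The substitution `f(z) ↦ f(z + tH(z))`, with `t` a new variable. -/
def translateAlong (H : σ → MvPolynomial σ R) :
    MvPolynomial σ R →ₐ[R] Polynomial (MvPolynomial σ R) :=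
  aeval fun j => Polynomial.C (X j) + Polynomial.X * Polynomial.C (H j)

theorem translateAlong_X (H : σ → MvPolynomial σ R) (j : σ) :
    translateAlong H (X j) = Polynomial.C (X j) + Polynomial.X * Polynomial.C (H j) :=
  aeval_X _ j

theorem aeval_translateAlong (H : σ → MvPolynomial σ R) (c f : MvPolynomial σ R) :
    Polynomial.aeval c (translateAlong H f) = bind₁ (fun j => X j + c * H j) f := by
  have h : ((Polynomial.aeval c).restrictScalars R).comp (translateAlong H) =
      bind₁ fun j => X j + c * H j := by
    ext1 j
    simp [translateAlong_X, mul_comm c]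
  exact DFunLike.congr_fun h f

theorem coeff_zero_translateAlong (H : σ → MvPolynomial σ R) (f : MvPolynomial σ R) :
    (translateAlong H f).coeff 0 = f := by
  simp [Polynomial.coeff_zero_eq_aeval_zero, aeval_translateAlong]

/-- The Jacobian matrix `(∂H_i/∂z_j)` of a family `H` of polynomials over any coefficient
semiring; it need not be square. -/
def jacobianMatrix (H : ι → MvPolynomial σ R) : Matrix ι σ (MvPolynomial σ R) :=
  Matrix.of fun i j => pderiv j (H i)

variable [Fintype σ]

theorem mkDerivation_eq_sum_pderiv_mul (v : σ → MvPolynomial σ R) (f : MvPolynomial σ R) :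
    mkDerivation R v f = ∑ j, pderiv j f * v j := by
  classical
  have h : mkDerivation R v = ∑ j, v j • pderiv j := by
    ext1 i
    simp [sum_derivation_apply, pderiv_X, Pi.single_apply]
  simp [h, sum_derivation_apply, mul_comm]

theorem jacobianMatrix_mulVec (H : ι → MvPolynomial σ R) (v : σ → MvPolynomial σ R) :
    jacobianMatrix H *ᵥ v = fun i => mkDerivation R v (H i) :=
  funext fun i => (mkDerivation_eq_sum_pderiv_mul v (H i)).symm

theorem jacobianMatrix_mulVec_X {d : ℕ} {H : ι → MvPolynomial σ R}
    (hH : ∀ i, (H i).IsHomogeneous d) : jacobianMatrix H *ᵥ X = d • H := by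
  ext1 i
  rw [Pi.smul_apply, ← (hH i).sum_X_mul_pderiv]
  exact Finset.sum_congr rfl fun j _ => mul_comm _ _

end CommSemiring

section CommRing

open MvPolynomial Matrix

variable {σ R : Type*} [CommRing R]

theorem derivative_translateAlong {H : σ → MvPolynomial σ R}
    (hH : ∀ i, mkDerivation R H (H i) = 0) (f : MvPolynomial σ R) :
    Polynomial.derivative (translateAlong H f) =
      coeffwiseDerivation (mkDerivation R H) (translateAlong H f) := by
  let ddt := (Polynomial.derivative' (R := MvPolynomial σ R)).restrictScalars R
  have agree : Set.EqOn ddt (coeffwiseDerivation (mkDerivation R H))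
      (Set.range fun j => translateAlong H (X j)) := by
    rintro _ ⟨j, rfl⟩
    simp [ddt, Polynomial.derivative', translateAlong_X, coeffwiseDerivation_C,
      coeffwiseDerivation_X, hH]
  refine Derivation.eqOn_adjoin agree ?_
  simp_rw [translateAlong_X, Algebra.adjoin_range_eq_range_aeval]
  exact ⟨f, rfl⟩

theorem translateAlong_eq_C [IsAddTorsionFree R] {H : σ → MvPolynomial σ R}
    (hH : ∀ i, mkDerivation R H (H i) = 0) {f : MvPolynomial σ R}
    (hf : mkDerivation R H f = 0) : translateAlong H f = Polynomial.C f := by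
  have h := eq_C_of_derivative_eq_coeffwiseDerivation (derivative_translateAlong hH f)
  rw [coeff_zero_translateAlong] at h
  exact h hf

theorem bind₁_X_add_mul_eq_self [IsAddTorsionFree R] {H : σ → MvPolynomial σ R}
    (hH : ∀ i, mkDerivation R H (H i) = 0) (c : MvPolynomial σ R) {f : MvPolynomial σ R}
    (hf : mkDerivation R H f = 0) : bind₁ (fun j => X j + c * H j) f = f := by
  rw [← aeval_translateAlong, translateAlong_eq_C hH hf, Polynomial.aeval_C,
    Algebra.algebraMap_self_apply]

variable [Fintype σ]

theorem mkDerivation_eq_zero_of_jacobianMatrix_sq_eq_zero [IsAddTorsionFree R] {d : ℕ}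
    {H : σ → MvPolynomial σ R} (hH : ∀ i, (H i).IsHomogeneous d)
    (hJ : jacobianMatrix H * jacobianMatrix H = 0) (i : σ) : mkDerivation R H (H i) = 0 := by
  rcases eq_or_ne d 0 with rfl | hd
  · rw [(totalDegree_eq_zero_iff_eq_C).mp ((hH i).totalDegree_le.antisymm (Nat.zero_le _)),
      derivation_C]
  · have h : d • (jacobianMatrix H *ᵥ H) = 0 := by
      rw [← mulVec_smul, ← jacobianMatrix_mulVec_X hH, mulVec_mulVec, hJ, zero_mulVec]
    rw [jacobianMatrix_mulVec] at h
    exact (smul_eq_zero_iff_right hd).mp (congrFun h i)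

theorem stmt16_general [IsAddTorsionFree R] {d : ℕ} {H : σ → MvPolynomial σ R}
    (hH : ∀ i, (H i).IsHomogeneous d) (hJ : jacobianMatrix H * jacobianMatrix H = 0) :
    (∀ i, bind₁ (fun j => X j - H j) (X i + H i) = X i) ∧
      ∀ i, bind₁ (fun j => X j + H j) (X i - H i) = X i := by
  have hD := mkDerivation_eq_zero_of_jacobianMatrix_sq_eq_zero hH hJ
  have hsub : ∀ i, bind₁ (fun j => X j - H j) (H i) = H i := fun i => by
    simpa [← sub_eq_add_neg] using bind₁_X_add_mul_eq_self hD (-1) (hD i)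
  have hadd : ∀ i, bind₁ (fun j => X j + H j) (H i) = H i := fun i => by
    simpa using bind₁_X_add_mul_eq_self hD 1 (hD i)
  exact ⟨fun i => by simp [hsub], fun i => by simp [hadd]⟩

end CommRing

/-- (Bass–Connell–Wright) If `H` is homogeneous of degree `d ≥ 2` and `(JH)² = 0`, then
the formal inverse of `F(z) = z + H(z)` is `G(z) = z - H(z)`. -/
theorem stmt16 (n d : ℕ) (hd : 2 ≤ d) (H : Fin n → MvPolynomial (Fin n) ℂ)
    (hH : ∀ i, (H i).IsHomogeneous d)
    (hJH2 : jacP H * jacP H = 0) :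
    (∀ i, MvPolynomial.bind₁ (fun j => MvPolynomial.X j - H j)
        (MvPolynomial.X i + H i) = MvPolynomial.X i)
    ∧ (∀ i, MvPolynomial.bind₁ (fun j => MvPolynomial.X j + H j)
        (MvPolynomial.X i - H i) = MvPolynomial.X i) :=
  stmt16_general hH hJH2
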